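/- There exist absolute constants c, C > 0 such that the following holds. For all n, B ∈ ℕ with 2 ≤ B ≤ n, for truly random h : {1,...,n} → {1,...,B} and s : {1,...,n} → {−1,1}, and for every i ∈ {1,...,n}, the one-row Count-Sketch estimate f̃_i = Σ_{j=1}^n 1[h(j)=h(i)]·s(j)·(1/j) satisfies c·(log B)/B ≤ E[|f̃_i − s(i)·(1/i)|] ≤ C·(log B)/B. -/

import Mathlib

/-- Expectation of a real-valued random variable on a finite probability space
with the uniform distribution. -/
noncomputable def expUnif {Ω : Type*} [Fintype Ω] (X : Ω → ℝ) : ℝ :=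
  (∑ ω : Ω, X ω) / (Fintype.card Ω : ℝ)

/-- Zipfian frequency of the item indexed by `i : Fin n` (representing item `i+1`):
`f_{i+1} = 1/(i+1)`. -/
noncomputable def zipf {n : ℕ} (i : Fin n) : ℝ := ((i : ℝ) + 1)⁻¹

/-- The sign `±1` encoded by a boolean. -/
def sgn (b : Bool) : ℝ := if b then 1 else -1

/-- One-row Count-Sketch counter at item `i`'s bucket, for hash function `h` and
sign function `s`: `Σ_j 1[h(j)=h(i)]·s(j)·f_j`. -/
noncomputable def csRow {n B : ℕ} (f : Fin n → ℝ) (h : Fin n → Fin B)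
    (s : Fin n → Bool) (i : Fin n) : ℝ :=
  ∑ j : Fin n, if h j = h i then sgn (s j) * f j else 0


section aux
open Finset

lemma sgn_orth {n : ℕ} (j k : Fin n) :
    ∑ s : Fin n → Bool, sgn (s j) * sgn (s k) = if j = k then (2:ℝ) ^ n else 0 := by
  split_ifs with hjk
  · subst hjk
    have : ∀ s : Fin n → Bool, sgn (s j) * sgn (s j) = 1 := by
      intro s; unfold sgn; split_ifs <;> norm_num
    simp [this]
  · apply Finset.sum_involution (fun (s : Fin n → Bool) _ => Function.update s j (!(s j)))
    · intro s _
      simp only [Function.update_self, Function.update_of_ne (Ne.symm hjk)]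
      unfold sgn
      cases s j <;> cases s k <;> norm_num
    · intro s _ _ h
      have := congrFun h j
      simp at this
    · intro s _; simp
    · intro s _; simp

/-- collision indicator -/
noncomputable def coll {n B : ℕ} (i j : Fin n) (h : Fin n → Fin B) : ℝ :=
  if h j = h i ∧ j ≠ i then 1 else 0

lemma coll_nonneg {n B : ℕ} (i j : Fin n) (h : Fin n → Fin B) : 0 ≤ coll i j h := by
  unfold coll; split_ifs <;> norm_num

lemma coll_sq {n B : ℕ} (i j : Fin n) (h : Fin n → Fin B) :
    coll i j h * coll i j h = coll i j h := by
  unfold coll; split_ifs <;> norm_num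

lemma card_const {n B : ℕ} (T : Finset (Fin n)) (a : Fin B) :
    #{h : Fin n → Fin B | ∀ k ∈ T, h k = a} = B ^ (n - #T) := by
  have : ({h : Fin n → Fin B | ∀ k ∈ T, h k = a} : Finset _) =
      Fintype.piFinset (fun k => if k ∈ T then ({a} : Finset (Fin B)) else univ) := by
    ext h
    simp only [mem_filter, mem_univ, true_and, Fintype.mem_piFinset]
    refine forall_congr' fun k => ?_
    split_ifs with hk <;> simp [hk]
  rw [this, Fintype.card_piFinset]
  have h2 : ∀ k, #(if k ∈ T then ({a} : Finset (Fin B)) else univ) = if k ∈ T then 1 else B := by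
    intro k; split_ifs <;> simp
  simp only [h2]
  rw [Finset.prod_ite]
  simp only [prod_const_one, one_mul, prod_const]
  congr 1
  rw [Finset.filter_not, Finset.card_sdiff]
  simp

lemma sum_const_ind {n B : ℕ} (hB : 0 < B) (T : Finset (Fin n)) :
    ∑ h : Fin n → Fin B, ∑ a : Fin B, (if ∀ k ∈ T, h k = a then (1:ℝ) else 0)
      = (B:ℝ) * ((B:ℝ) ^ n / (B:ℝ) ^ #T) := by
  rw [Finset.sum_comm]
  have hT : #T ≤ n := by simpa using Finset.card_le_univ T
  have hB' : (B:ℝ) ≠ 0 := by positivity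
  have : ∀ a : Fin B, ∑ h : Fin n → Fin B, (if ∀ k ∈ T, h k = a then (1:ℝ) else 0)
      = (B:ℝ) ^ n / (B:ℝ) ^ #T := by
    intro a
    rw [Finset.sum_boole, card_const]
    push_cast
    rw [pow_sub₀ _ hB' hT]; rfl
  simp [this]

lemma sum_coll {n B : ℕ} (hB : 0 < B) (i j : Fin n) (hj : j ≠ i) :
    ∑ h : Fin n → Fin B, coll i j h = (B:ℝ) ^ n / B := by
  have h1 := sum_const_ind hB ({i, j} : Finset (Fin n))
  have hc : #({i, j} : Finset (Fin n)) = 2 := Finset.card_pair hj.symm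
  rw [hc] at h1
  have hB' : (B:ℝ) ≠ 0 := by positivity
  calc _ = _ := ?_
    _ = _ := h1
    _ = _ := by field_simp
  refine Finset.sum_congr rfl fun h _ => ?_
  rw [Finset.sum_eq_single (h i)]
  · unfold coll; simp [hj]
  · intro a _ ha
    rw [if_neg]
    intro H
    exact ha (H i (by simp)).symm
  · simp

lemma sum_coll_coll {n B : ℕ} (hB : 0 < B) (i j k : Fin n) (hj : j ≠ i) (hk : k ≠ i)
    (hjk : j ≠ k) :
    ∑ h : Fin n → Fin B, coll i j h * coll i k h = (B:ℝ) ^ n / B ^ 2 := by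
  have h1 := sum_const_ind hB ({i, j, k} : Finset (Fin n))
  have hc : #({i, j, k} : Finset (Fin n)) = 3 :=
    Finset.card_eq_three.2 ⟨i, j, k, hj.symm, hk.symm, hjk, rfl⟩
  rw [hc] at h1
  have hB' : (B:ℝ) ≠ 0 := by positivity
  calc _ = _ := ?_
    _ = _ := h1
    _ = _ := by field_simp
  refine Finset.sum_congr rfl fun h _ => ?_
  rw [Finset.sum_eq_single (h i)]
  · unfold coll; by_cases h1 : h j = h i <;> by_cases h2 : h k = h i <;> simp [hj, hk, h1, h2]
  · intro a _ ha
    rw [if_neg]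
    intro H
    exact ha (H i (by simp)).symm
  · simp

lemma err_eq {n B : ℕ} (f : Fin n → ℝ) (h : Fin n → Fin B) (s : Fin n → Bool) (i : Fin n) :
    csRow f h s i - sgn (s i) * f i = ∑ j, sgn (s j) * (coll i j h * f j) := by
  unfold csRow coll
  have : sgn (s i) * f i = ∑ j, if j = i then sgn (s j) * f j else 0 := by simp
  rw [this, ← Finset.sum_sub_distrib]
  refine Finset.sum_congr rfl fun j _ => ?_
  by_cases hj : j = i
  · subst hj; simp
  · simp [hj]

/-- Jensen -/
lemma sum_abs_ge {n : ℕ} (a : Fin n → ℝ) (j : Fin n) :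
    2 ^ n * a j ≤ ∑ s : Fin n → Bool, |∑ k, sgn (s k) * a k| := by
  have : (2:ℝ) ^ n * a j = ∑ s : Fin n → Bool, sgn (s j) * ∑ k, sgn (s k) * a k := by
    simp_rw [Finset.mul_sum]
    rw [Finset.sum_comm]
    simp_rw [← mul_assoc, ← Finset.sum_mul, sgn_orth]
    simp
  rw [this]
  refine Finset.sum_le_sum fun s _ => ?_
  refine (le_abs_self _).trans ?_
  rw [abs_mul]
  have : |sgn (s j)| = 1 := by unfold sgn; split_ifs <;> norm_num
  rw [this, one_mul]

lemma sum_sq_eq {n : ℕ} (a : Fin n → ℝ) :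
    ∑ s : Fin n → Bool, (∑ k, sgn (s k) * a k) ^ 2 = 2 ^ n * ∑ k, a k ^ 2 := by
  have : ∀ s : Fin n → Bool, (∑ k, sgn (s k) * a k) ^ 2
      = ∑ j, ∑ k, (sgn (s j) * sgn (s k)) * (a j * a k) := by
    intro s
    rw [sq, Finset.sum_mul_sum]
    refine Finset.sum_congr rfl fun j _ => Finset.sum_congr rfl fun k _ => by ring
  simp_rw [this]
  rw [Finset.sum_comm]
  simp_rw [Finset.sum_comm (s := (univ : Finset (Fin n → Bool))), ← Finset.sum_mul, sgn_orth]
  simp [Finset.mul_sum, sq]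

lemma sum_abs_le {n : ℕ} (a : Fin n → ℝ) (ha : ∀ k, 0 ≤ a k) (J : Finset (Fin n)) (b : ℝ)
    (hb : 0 < b) :
    ∑ s : Fin n → Bool, |∑ k, sgn (s k) * a k| ≤
      2 ^ n * (∑ k ∈ J, a k + (b * ∑ k ∈ Jᶜ, a k ^ 2 + 1 / b) / 2) := by
  have h1 : ∀ s : Fin n → Bool, |∑ k, sgn (s k) * a k| ≤
      ∑ k ∈ J, a k + (b * (∑ k, sgn (s k) * (if k ∈ Jᶜ then a k else 0)) ^ 2 + 1 / b) / 2 := by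
    intro s
    rw [← Finset.sum_add_sum_compl J]
    refine (abs_add_le _ _).trans (add_le_add ?_ ?_)
    · refine (Finset.abs_sum_le_sum_abs _ _).trans (Finset.sum_le_sum fun k _ => ?_)
      have : |sgn (s k)| = 1 := by unfold sgn; split_ifs <;> norm_num
      rw [abs_mul, this, one_mul, abs_of_nonneg (ha k)]
    · have : ∑ k, sgn (s k) * (if k ∈ Jᶜ then a k else 0) = ∑ k ∈ Jᶜ, sgn (s k) * a k := by
        simp_rw [mul_ite, mul_zero]
        rw [Finset.sum_ite_mem, Finset.univ_inter]
      rw [this]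
      generalize ∑ k ∈ Jᶜ, sgn (s k) * a k = t
      have h3 : 0 ≤ (b * |t| - 1) ^ 2 / b := by positivity
      have h4 : (b * |t| - 1) ^ 2 / b = b * t ^ 2 - 2 * |t| + 1 / b := by
        rw [← sq_abs t]; field_simp; ring
      linarith
  refine (Finset.sum_le_sum fun s _ => h1 s).trans (le_of_eq ?_)
  rw [Finset.sum_add_distrib, ← Finset.sum_div, Finset.sum_add_distrib, ← Finset.mul_sum,
    sum_sq_eq]
  have : ∑ k, (if k ∈ Jᶜ then a k else 0) ^ 2 = ∑ k ∈ Jᶜ, a k ^ 2 := by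
    simp_rw [ite_pow, zero_pow two_ne_zero]
    rw [Finset.sum_ite_mem, Finset.univ_inter]
  rw [this]
  simp
  ring

lemma sum_abs_ge' {n B : ℕ} (f : Fin n → ℝ) (hf : ∀ k, 0 ≤ f k) (h : Fin n → Fin B) (i : Fin n)
    (J : Finset (Fin n)) :
    2 ^ n * ∑ j ∈ J, f j * (coll i j h - (∑ k ∈ J, coll i j h * coll i k h) / 4) ≤
      ∑ s : Fin n → Bool, |∑ k, sgn (s k) * (coll i k h * f k)| := by
  set S := ∑ s : Fin n → Bool, |∑ k, sgn (s k) * (coll i k h * f k)| with hS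
  have hS0 : 0 ≤ S := Finset.sum_nonneg fun s _ => abs_nonneg _
  have h1 : ∀ j, 2 ^ n * (coll i j h * f j) ≤ S := fun j =>
    sum_abs_ge (fun k => coll i k h * f k) j
  set m := ∑ k ∈ J, coll i k h with hm
  have hm0 : 0 ≤ m := Finset.sum_nonneg fun k _ => coll_nonneg _ _ _
  set T := ∑ j ∈ J, coll i j h * f j with hT
  have hT0 : 0 ≤ T := Finset.sum_nonneg fun k _ => mul_nonneg (coll_nonneg _ _ _) (hf k)
  have h2 : ∑ j ∈ J, f j * (coll i j h - (∑ k ∈ J, coll i j h * coll i k h) / 4)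
      = T * (1 - m / 4) := by
    rw [hT, Finset.sum_mul]
    refine Finset.sum_congr rfl fun j _ => ?_
    rw [← Finset.mul_sum]; ring
  rw [h2]
  have h3 : 2 ^ n * T ≤ m * S := by
    rw [hT, hm, Finset.mul_sum, Finset.sum_mul]
    refine Finset.sum_le_sum fun j _ => ?_
    calc _ = coll i j h * (2 ^ n * (coll i j h * f j)) := by
            linear_combination (2:ℝ) ^ n * f j * (-(coll_sq i j h))
      _ ≤ _ := mul_le_mul_of_nonneg_left (h1 j) (coll_nonneg _ _ _)
  have hp : (0:ℝ) ≤ 2 ^ n * T := by positivity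
  rw [← mul_assoc]
  generalize 2 ^ n * T = U at *
  by_cases hm1 : 4 ≤ m
  · have : U * (1 - m / 4) ≤ 0 := mul_nonpos_of_nonneg_of_nonpos hp (by linarith)
    linarith
  · have : U * (1 - m / 4) ≤ m * S * (1 - m / 4) :=
      mul_le_mul_of_nonneg_right h3 (by linarith)
    nlinarith [mul_nonneg hS0 (sq_nonneg (m - 2))]

lemma zipf_nonneg {n : ℕ} (i : Fin n) : 0 ≤ zipf i := by unfold zipf; positivity

lemma zipf_le_one {n : ℕ} (i : Fin n) : zipf i ≤ 1 := by
  unfold zipf; apply inv_le_one_of_one_le₀; simp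

lemma sum_zipf {n B : ℕ} (hB : B ≤ n) :
    ∑ j : Fin n with j.val < B, zipf j = (harmonic B : ℝ) := by
  rw [Finset.sum_filter]
  unfold zipf
  rw [Fin.sum_univ_eq_sum_range (fun j => if j < B then ((j:ℝ) + 1)⁻¹ else 0) n,
    ← Finset.sum_filter]
  have : (range n).filter (fun j => j < B) = range B := by ext; simp; omega
  rw [this]
  simp [harmonic]

lemma tail_aux {B : ℕ} (hB : 0 < B) (n : ℕ) (hn : B ≤ n) :
    ∑ j ∈ range n, (if B ≤ j then (((j:ℝ) + 1)⁻¹) ^ 2 else 0) ≤ 1 / B - 1 / n := by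
  induction n, hn using Nat.le_induction with
  | base =>
    rw [Finset.sum_eq_zero]
    · simp
    · intro j hj; rw [if_neg]; simp at hj; omega
  | succ n hn ih =>
    rw [Finset.sum_range_succ, if_pos hn]
    have hn0 : (0:ℝ) < n := by exact_mod_cast (by omega : 0 < n)
    have : (((n:ℝ) + 1)⁻¹) ^ 2 ≤ 1 / n - 1 / ((n:ℝ) + 1) := by
      rw [div_sub_div _ _ (by positivity) (by positivity), inv_pow, ← one_div,
        div_le_div_iff₀ (by positivity) (by positivity)]
      nlinarith
    push_cast
    linarith

lemma tail_zipf {n B : ℕ} (hB : 0 < B) (hn : B ≤ n) :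
    ∑ j ∈ (univ.filter (fun j : Fin n => j.val < B))ᶜ, zipf j ^ 2 ≤ 1 / B := by
  rw [Finset.compl_filter, Finset.sum_filter]
  unfold zipf
  simp_rw [not_lt]
  rw [Fin.sum_univ_eq_sum_range (fun j => if B ≤ j then (((j:ℝ) + 1)⁻¹) ^ 2 else 0) n]
  refine (tail_aux hB n hn).trans ?_
  simp

lemma harmonic_lower {B : ℕ} (hB : 2 ≤ B) : Real.log B / 2 ≤ (harmonic B : ℝ) - 1 := by
  obtain ⟨m, rfl⟩ : ∃ m, B = m + 1 := ⟨B - 1, by omega⟩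
  have h1 := log_add_one_le_harmonic m
  have h2 : (harmonic m : ℝ) / 2 ≤ (harmonic (m + 1) : ℝ) - 1 := by
    simp only [harmonic]
    rw [Finset.sum_range_succ']
    push_cast
    rw [Finset.sum_div]
    simp only [inv_one, add_sub_cancel_right]
    refine Finset.sum_le_sum fun j _ => ?_
    rw [div_eq_mul_inv, ← mul_inv]
    apply inv_anti₀ (by positivity)
    have : (0:ℝ) ≤ j := by positivity
    linarith
  push_cast at *
  linarith

lemma exp_eq {n B : ℕ} (i : Fin n) :
    expUnif (fun ω : (Fin n → Fin B) × (Fin n → Bool) =>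
              |csRow zipf ω.1 ω.2 i - sgn (ω.2 i) * zipf i|) =
    (∑ h : Fin n → Fin B, ∑ s : Fin n → Bool, |∑ k, sgn (s k) * (coll i k h * zipf k)|)
      / ((B:ℝ) ^ n * 2 ^ n) := by
  unfold expUnif
  simp_rw [err_eq]
  rw [Fintype.sum_prod_type]
  simp

lemma upper {n B : ℕ} (hB : 2 ≤ B) (hn : B ≤ n) (i : Fin n) :
    ∑ h : Fin n → Fin B, ∑ s : Fin n → Bool, |∑ k, sgn (s k) * (coll i k h * zipf k)| ≤
      (4 * Real.log B / B) * ((B:ℝ) ^ n * 2 ^ n) := by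
  have hB0 : 0 < B := by omega
  have hBr : (0:ℝ) < B := by exact_mod_cast hB0
  set J := univ.filter (fun j : Fin n => j.val < B) with hJ
  have hc : ∀ k, ∑ h : Fin n → Fin B, coll i k h ≤ (B:ℝ) ^ n / B := by
    intro k
    by_cases hk : k = i
    · subst hk; simp [coll]; positivity
    · exact (sum_coll hB0 i k hk).le
  refine (Finset.sum_le_sum fun h _ => sum_abs_le (fun k => coll i k h * zipf k)
    (fun k => mul_nonneg (coll_nonneg _ _ _) (zipf_nonneg _)) J B hBr).trans ?_
  rw [← Finset.mul_sum, Finset.sum_add_distrib, ← Finset.sum_div, Finset.sum_add_distrib,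
    ← Finset.mul_sum, Finset.sum_comm, Finset.sum_comm (t := Jᶜ)]
  have e1 : ∑ y ∈ J, ∑ x : Fin n → Fin B, coll i y x * zipf y ≤ (B:ℝ) ^ n / B * harmonic B := by
    rw [← sum_zipf hn, Finset.mul_sum]
    refine Finset.sum_le_sum fun k _ => ?_
    rw [← Finset.sum_mul]
    exact mul_le_mul_of_nonneg_right (hc k) (zipf_nonneg _)
  have e2 : ∑ y ∈ Jᶜ, ∑ x : Fin n → Fin B, (coll i y x * zipf y) ^ 2 ≤ (B:ℝ) ^ n / B * (1 / B) := by
    refine le_trans ?_ (mul_le_mul_of_nonneg_left (tail_zipf hB0 hn) (by positivity))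
    rw [Finset.mul_sum]
    refine Finset.sum_le_sum fun k _ => ?_
    simp_rw [mul_pow, sq (coll _ _ _), coll_sq]
    rw [← Finset.sum_mul]
    exact mul_le_mul_of_nonneg_right (hc k) (by positivity)
  have e3 : ∑ x : Fin n → Fin B, (1:ℝ) / B = (B:ℝ) ^ n / B := by
    simp [div_eq_mul_inv]
  rw [e3]
  have hl : (harmonic B : ℝ) + 1 ≤ 4 * Real.log B := by
    have h1 := harmonic_le_one_add_log B
    have h2 : Real.log 2 ≤ Real.log B := Real.log_le_log (by norm_num) (by exact_mod_cast hB)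
    have := Real.log_two_gt_d9
    linarith
  have e2' := mul_le_mul_of_nonneg_left e2 hBr.le
  have e4 : (B:ℝ) * ((B:ℝ) ^ n / B * (1 / B)) = (B:ℝ) ^ n / B := by field_simp
  rw [e4] at e2'
  calc _ ≤ (2:ℝ) ^ n * ((B:ℝ) ^ n / B * harmonic B + ((B:ℝ) ^ n / B + (B:ℝ) ^ n / B) / 2) := by
        gcongr
    _ = (2:ℝ) ^ n * ((B:ℝ) ^ n / B) * (harmonic B + 1) := by ring
    _ ≤ (2:ℝ) ^ n * ((B:ℝ) ^ n / B) * (4 * Real.log B) := by gcongr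
    _ = _ := by ring

lemma lower {n B : ℕ} (hB : 2 ≤ B) (hn : B ≤ n) (i : Fin n) :
    (1 / 4 * Real.log B / B) * ((B:ℝ) ^ n * 2 ^ n) ≤
    ∑ h : Fin n → Fin B, ∑ s : Fin n → Bool, |∑ k, sgn (s k) * (coll i k h * zipf k)| := by
  have hB0 : 0 < B := by omega
  have hBr : (0:ℝ) < B := by exact_mod_cast hB0
  set J0 := univ.filter (fun j : Fin n => j.val < B) with hJ0
  set J := J0.erase i with hJ
  have hcard0 : #J0 ≤ B := by
    have : J0.image Fin.val ⊆ range B := by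
      intro x; simp [hJ0]; intro a h1 h2; omega
    have h2 := Finset.card_le_card this
    rwa [Finset.card_image_of_injective _ Fin.val_injective, card_range] at h2
  have hcard : (#J : ℝ) ≤ B := by
    exact_mod_cast (Finset.card_le_card (Finset.erase_subset i J0)).trans hcard0
  refine le_trans ?_ (Finset.sum_le_sum fun h _ => sum_abs_ge' zipf zipf_nonneg h i J)
  rw [← Finset.mul_sum, Finset.sum_comm]
  have key : ∀ j ∈ J, zipf j * ((B:ℝ) ^ n / B / 2) ≤ ∑ h : Fin n → Fin B,
      zipf j * (coll i j h - (∑ k ∈ J, coll i j h * coll i k h) / 4) := by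
    intro j hj
    have hji : j ≠ i := Finset.ne_of_mem_erase hj
    rw [← Finset.mul_sum, Finset.sum_sub_distrib, ← Finset.sum_div, Finset.sum_comm,
      sum_coll hB0 i j hji]
    refine mul_le_mul_of_nonneg_left ?_ (zipf_nonneg _)
    have : ∑ k ∈ J, ∑ h : Fin n → Fin B, coll i j h * coll i k h ≤
        ∑ k ∈ J, ((if j = k then (B:ℝ) ^ n / B else 0) + (B:ℝ) ^ n / B ^ 2) := by
      refine Finset.sum_le_sum fun k hk => ?_
      have hki : k ≠ i := Finset.ne_of_mem_erase hk
      split_ifs with hjk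
      · subst hjk
        simp_rw [coll_sq]
        rw [sum_coll hB0 i j hji]
        have : 0 ≤ (B:ℝ) ^ n / B ^ 2 := by positivity
        linarith
      · rw [sum_coll_coll hB0 i j k hji hki hjk]; simp
    rw [Finset.sum_add_distrib, Finset.sum_ite_eq, if_pos hj, Finset.sum_const, nsmul_eq_mul] at this
    have h5 : (#J : ℝ) * ((B:ℝ) ^ n / B ^ 2) ≤ B * ((B:ℝ) ^ n / B ^ 2) := by gcongr
    have h6 : (B:ℝ) * ((B:ℝ) ^ n / B ^ 2) = (B:ℝ) ^ n / B := by field_simp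
    linarith
  have hs : Real.log B / 2 ≤ ∑ j ∈ J, zipf j := by
    have h1 := harmonic_lower hB
    rw [← sum_zipf hn] at h1
    have h2 : ∑ j ∈ J0, zipf j ≤ ∑ j ∈ J, zipf j + 1 := by
      by_cases hi : i ∈ J0
      · rw [← Finset.sum_erase_add _ _ hi]
        have := zipf_le_one i
        linarith
      · rw [hJ, Finset.erase_eq_of_notMem hi]; linarith
    linarith
  have h7 := Finset.sum_le_sum key
  rw [← Finset.sum_mul] at h7
  calc _ = (2:ℝ) ^ n * (Real.log B / 2 * ((B:ℝ) ^ n / B / 2)) := by ring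
    _ ≤ (2:ℝ) ^ n * ((∑ j ∈ J, zipf j) * ((B:ℝ) ^ n / B / 2)) := by gcongr
    _ ≤ _ := by gcongr


end aux

/-- the one-row Count-Sketch error on Zipfian input is `Θ(log B / B)`. -/
theorem countSketch_one_row_zipfian_tight :
    ∃ c C : ℝ, 0 < c ∧ 0 < C ∧
      ∀ n B : ℕ, 2 ≤ B → B ≤ n → ∀ i : Fin n,
        c * Real.log (B : ℝ) / (B : ℝ) ≤
            expUnif (fun ω : (Fin n → Fin B) × (Fin n → Bool) =>
              |csRow zipf ω.1 ω.2 i - sgn (ω.2 i) * zipf i|) ∧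
        expUnif (fun ω : (Fin n → Fin B) × (Fin n → Bool) =>
              |csRow zipf ω.1 ω.2 i - sgn (ω.2 i) * zipf i|) ≤
            C * Real.log (B : ℝ) / (B : ℝ) := by
  refine ⟨1 / 4, 4, by norm_num, by norm_num, fun n B hB hn i => ?_⟩
  have hBr : (0:ℝ) < B := by exact_mod_cast (by omega : 0 < B)
  rw [exp_eq]
  constructor
  · rw [le_div_iff₀ (by positivity)]
    exact lower hB hn i
  · rw [div_le_iff₀ (by positivity)]
    exact upper hB hn i
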